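/- Let f be a homeomorphism of the open annulus 𝔸 isotopic to the identity and satisfying the intersection property, and let F be a lift of f to ℝ². If a compact set K ⊂ 𝔸 separates the two ends N and S of 𝔸, then Rot_weak,K(F) ≠ ∅. Consequently Rot_weak(F) ≠ ∅. -/

import Mathlib

open Filter Topology Set

noncomputable section

/-- The plane ℝ². -/
abbrev Plane := ℝ × ℝ

/-- The open annulus 𝔸 = ℝ/ℤ × ℝ. -/
abbrev Ann := AddCircle (1 : ℝ) × ℝ

/-- The covering map π : ℝ² → 𝔸, (x,y) ↦ (x + ℤ, y). -/
def prj : Plane → Ann := fun p => ((p.1 : AddCircle (1 : ℝ)), p.2)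

/-- The deck transformation T^k : ℝ² → ℝ², (x,y) ↦ (x + k, y). -/
def Tr (k : ℤ) : Plane → Plane := fun p => (p.1 + (k : ℝ), p.2)

/-- `F` is a lift of `f` to the universal cover ℝ² of the annulus. -/
def IsLift (f : Ann ≃ₜ Ann) (F : Plane ≃ₜ Plane) : Prop :=
  ∀ p : Plane, prj (F p) = f (prj p)

/-- `f` is isotopic to the identity: there is a continuous family of homeomorphisms
joining the identity to `f`. -/
def IsotopicToId (f : Ann ≃ₜ Ann) : Prop :=
  ∃ H : ℝ → Ann → Ann,
    Continuous (fun q : ℝ × Ann => H q.1 q.2) ∧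
    (∀ t : ℝ, ∃ h : Ann ≃ₜ Ann, ∀ z, H t z = h z) ∧
    (∀ z, H 0 z = z) ∧ (∀ z, H 1 z = f z)

/-- An essential circle in 𝔸: a simple closed curve which is not null-homotopic. -/
def IsEssentialCircle (c : Set Ann) : Prop :=
  ∃ φ : C(AddCircle (1 : ℝ), Ann), Function.Injective φ ∧ Set.range φ = c ∧
    ¬ ∃ pt : Ann, φ.Homotopic (ContinuousMap.const _ pt)

/-- `f` has the intersection property: every essential circle meets its image. -/
def IntersectionProperty (f : Ann → Ann) : Prop :=
  ∀ c : Set Ann, IsEssentialCircle c → (c ∩ f '' c).Nonempty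

/-- `z` is a positively recurrent point of `g`: some subsequence of the forward orbit
of `z` converges to `z`. -/
def PosRec {X : Type*} [TopologicalSpace X] (g : X → X) (z : X) : Prop :=
  ∃ φ : ℕ → ℕ, StrictMono φ ∧ Tendsto (fun k => g^[φ k] z) atTop (𝓝 z)

/-- The positively recurrent point `z` has rotation number `ρ` for the lift `F` of `f`. -/
def HasRotNum (f : Ann → Ann) (F : Plane → Plane) (z : Ann) (ρ : ℝ) : Prop :=
  PosRec f z ∧
    ∀ zt : Plane, prj zt = z →
      ∀ φ : ℕ → ℕ, StrictMono φ →
        Tendsto (fun k => f^[φ k] z) atTop (𝓝 z) →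
        Tendsto (fun k => ((F^[φ k] zt).1 - zt.1) / (φ k : ℝ)) atTop (𝓝 ρ)

/-- The rotation set Rot(F): the set of rotation numbers of positively recurrent
points of `f`. -/
def Rot (f : Ann → Ann) (F : Plane → Plane) : Set ℝ := {ρ | ∃ z, HasRotNum f F z ρ}

/-- The region `L(Γ)` of the plane on the left (west) of a line `Γ` (as a subset of ℝ²):
points lying in the connected component of the complement of `Γ` containing all far-west
points of the horizontal axis. -/
def Lset (Γ : Set Plane) : Set Plane :=
  {p | ∃ s : ℝ, ∀ x ≤ s, p ∈ connectedComponentIn Γᶜ ((x, 0) : Plane)}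

/-- The region `R(Γ)` of the plane on the right (east) of a line `Γ`. -/
def Rset (Γ : Set Plane) : Set Plane :=
  {p | ∃ s : ℝ, ∀ x ≥ s, p ∈ connectedComponentIn Γᶜ ((x, 0) : Plane)}

/-- The relation `Γ₁ < Γ₂` on (essential, oriented from south to north) lines:
`Cl(L(Γ₁)) ⊆ L(Γ₂)`. -/
def lineLT (Γ₁ Γ₂ : Set Plane) : Prop := closure (Lset Γ₁) ⊆ Lset Γ₂

/-- An essential line in ℝ², oriented from south to north: a properly embedded copy of ℝ
whose second coordinate tends to ±∞ at ±∞. -/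
def IsEssLinePlane (Γ : ℝ → Plane) : Prop :=
  Continuous Γ ∧ Function.Injective Γ ∧ IsProperMap Γ ∧
    Tendsto (fun t => (Γ t).2) atTop atTop ∧ Tendsto (fun t => (Γ t).2) atBot atBot

/-- An essential line in the annulus 𝔸: a properly embedded simple path joining one end
to the other. -/
def IsEssLineAnn (γ : ℝ → Ann) : Prop :=
  Continuous γ ∧ Function.Injective γ ∧ IsProperMap γ ∧
    ((Tendsto (fun t => (γ t).2) atTop atTop ∧ Tendsto (fun t => (γ t).2) atBot atBot) ∨
     (Tendsto (fun t => (γ t).2) atTop atBot ∧ Tendsto (fun t => (γ t).2) atBot atTop))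

/-- An oriented essential line in 𝔸 joining the lower end S to the upper end N. -/
def IsEssLineAnnSN (γ : ℝ → Ann) : Prop :=
  Continuous γ ∧ Function.Injective γ ∧ IsProperMap γ ∧
    Tendsto (fun t => (γ t).2) atTop atTop ∧ Tendsto (fun t => (γ t).2) atBot atBot

/-- The weak rotation set of `F` relative to a compact set `K` of the annulus,
as a subset of [-∞,+∞]. -/
def RotWeakK (F : Plane → Plane) (K : Set Ann) : Set EReal :=
  {r | ∃ zs : ℕ → Plane, ∃ ns : ℕ → ℕ,
      (∀ k, prj (zs k) ∈ K) ∧ (∀ k, prj (F^[ns k] (zs k)) ∈ K) ∧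
      (∀ k, 0 < ns k) ∧ Tendsto ns atTop atTop ∧
      Tendsto (fun k => ((((F^[ns k] (zs k)).1 - (zs k).1) / (ns k : ℝ) : ℝ) : EReal))
        atTop (𝓝 r)}

/-- The weak rotation set of `F`: union of the `RotWeakK F K` over all compact `K ⊆ 𝔸`. -/
def RotWeak (F : Plane → Plane) : Set EReal :=
  ⋃ K ∈ {K : Set Ann | IsCompact K}, RotWeakK F K

/-- `K` separates the two ends of the annulus: no connected subset of its complement
accumulates on both ends. -/
def SeparatesEnds (K : Set Ann) : Prop :=
  ∀ C : Set Ann, C ⊆ Kᶜ → IsConnected C →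
    (∃ M : ℝ, ∀ z ∈ C, z.2 ≤ M) ∨ (∃ M : ℝ, ∀ z ∈ C, M ≤ z.2)

/-!
Near a compact set `K` which separates the ends there is an essential circle: otherwise the
components of a fine grid around the lift of `K` would be permuted freely by the deck
transformations, so that the angular coordinate would lift to a real function on `K`; a shortest
walk in the grid joining a vertex to one of its translates then projects onto an essential circle.
Applied inside a small neighbourhood of `K`, this turns the intersection property into
`K ∩ f(K) ≠ ∅`.

The intersection property passes to the iterates of `f`. If an essential circle is disjoint from its
image by `f ^ n`, then the component of its complement at the end `S` is mapped by `f ^ n` or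
`f ^ (-n)` into itself together with its boundary. It can be modified into a neighbourhood of `S`
which is mapped by `f` or `f⁻¹` into itself together with its boundary, and this boundary is a
separating compact set disjoint from its image. Hence `K` contains points which return to `K` at any
prescribed time, and compactness of `[-∞, +∞]` provides a weak rotation number.
-/

/-! ### Null-homotopic maps and essential circles -/

lemma exists_lift_of_nullhomotopic {A E X : Type*} [TopologicalSpace A] [TopologicalSpace E]
    [TopologicalSpace X] {p : E → X} (hp : IsCoveringMap p) (hsurj : p.Surjective) {f : C(A, X)}
    (hf : f.Nullhomotopic) : ∃ g : C(A, E), ∀ a, p (g a) = f a := by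
  obtain ⟨y, hy⟩ := hf
  obtain ⟨e, rfl⟩ := hsurj y
  obtain ⟨H⟩ := hy.symm
  let L : C(unitInterval × A, E) :=
    hp.liftHomotopy H.toContinuousMap (ContinuousMap.const A e) fun a => H.apply_zero a
  have hL (a : A) : p (L (1, a)) = H (1, a) := congrFun (hp.liftHomotopy_lifts
    H.toContinuousMap (ContinuousMap.const A e) fun a => H.apply_zero a) (1, a)
  exact ⟨L.comp ((ContinuousMap.const A 1).prodMk (ContinuousMap.id A)), fun a =>
    (hL a).trans (H.apply_one a)⟩

lemma not_nullhomotopic_of_lift {p q : ℝ} {φ : C(AddCircle p, AddCircle q)} {a : ℝ → ℝ}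
    (ha : Continuous a) (hlift : ∀ s : ℝ, (a s : AddCircle q) = φ s) (hne : a p ≠ a 0) :
    ¬ φ.Nullhomotopic := by
  intro hφ
  obtain ⟨g, hg⟩ := exists_lift_of_nullhomotopic (AddCircle.isCoveringMap_coe q)
    QuotientAddGroup.mk_surjective hφ
  replace hg (x : AddCircle p) : (g x : AddCircle q) = φ x := hg x
  have hcont : Continuous fun s : ℝ => g s + (a 0 - g (0 : ℝ)) :=
    (g.continuous.comp (AddCircle.continuous_mk' p)).add continuous_const
  have heq : a = fun s : ℝ => g s + (a 0 - g (0 : ℝ)) := by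
    refine (AddCircle.isCoveringMap_coe q).eq_of_comp_eq ha hcont (funext fun s => ?_) 0
      (add_sub_cancel _ _).symm
    simp only [Function.comp_apply, AddCircle.coe_add, AddCircle.coe_sub, hlift, hg, sub_self,
      add_zero]
  refine hne ((congrFun heq p).trans ?_)
  rw [AddCircle.coe_period, ← AddCircle.coe_zero, add_sub_cancel]

lemma not_nullhomotopic_id_addCircle {p : ℝ} (hp : p ≠ 0) :
    ¬ (ContinuousMap.id (AddCircle p)).Nullhomotopic :=
  not_nullhomotopic_of_lift continuous_id (fun _ => rfl) hp

lemma nullhomotopic_of_forall_lift {p : ℝ} {A : Type*} [TopologicalSpace A]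
    {φ : C(A, AddCircle p)} (g : C(A, ℝ)) (hg : ∀ x, (g x : AddCircle p) = φ x) :
    φ.Nullhomotopic := by
  have hφ : φ = ContinuousMap.comp ⟨((↑) : ℝ → AddCircle p), AddCircle.continuous_mk' p⟩ g :=
    ContinuousMap.ext fun x => (hg x).symm
  rw [hφ, ← ContinuousMap.id_comp g]
  exact ((id_nullhomotopic ℝ).comp_left g).comp_right _

lemma homotopic_of_norm_sub_lt {X E : Type*} [TopologicalSpace X] [NormedAddCommGroup E]
    [NormedSpace ℝ E] {f g : C(X, ({0}ᶜ : Set E))} (h : ∀ x, ‖(g x : E) - f x‖ < ‖(f x : E)‖) :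
    f.Homotopic g := by
  refine ⟨⟨⟨fun q => ⟨f q.2 + (q.1 : ℝ) • (g q.2 - f q.2 : E), fun hzero => ?_⟩, by fun_prop⟩,
    fun x => by simp, fun x => by simp⟩⟩
  refine (h q.2).not_ge ?_
  calc ‖(f q.2 : E)‖ = (q.1 : ℝ) * ‖(g q.2 - f q.2 : E)‖ := by
        rw [congrArg norm (eq_neg_of_add_eq_zero_left hzero), norm_neg, norm_smul,
          Real.norm_of_nonneg q.1.2.1]
    _ ≤ ‖(g q.2 - f q.2 : E)‖ := mul_le_of_le_one_left (norm_nonneg _) q.1.2.2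

/-- The annulus is homeomorphic to the punctured plane, through polar coordinates with radius
`exp y`. -/
def annPolar : Ann ≃ₜ ({0}ᶜ : Set ℂ) :=
  ((AddCircle.homeomorphCircle one_ne_zero).prodCongr Real.expOrderIso.toHomeomorph).trans
    (homeomorphUnitSphereProd ℂ).symm

lemma norm_annPolar (z : Ann) : ‖(annPolar z : ℂ)‖ = Real.exp z.2 := by
  have hsmul : (annPolar z : ℂ) =
      Real.exp z.2 • (AddCircle.homeomorphCircle one_ne_zero z.1 : ℂ) := rfl
  rw [hsmul, norm_smul, Circle.norm_coe, mul_one, Real.norm_of_nonneg (Real.exp_pos _).le]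

lemma nullhomotopic_of_joinedIn {X : Type*} [TopologicalSpace X] {φ : C(X, Ann)} {z₀ z₁ : Ann}
    (hjoin : JoinedIn (range φ)ᶜ z₀ z₁) (h₀ : ∀ x, z₀.2 < (φ x).2) (h₁ : ∀ x, (φ x).2 < z₁.2) :
    φ.Nullhomotopic := by
  -- In the punctured plane the curve can be translated so that its position relative to the
  -- puncture runs from `0` to `z₀` and then along the path to `z₁`, which it does not surround.
  let e : C(X, ({0}ᶜ : Set ℂ)) := (annPolar : C(Ann, ({0}ᶜ : Set ℂ))).comp φ
  have hne {z : Ann} (hz : z ∈ (range φ)ᶜ) (x : X) : (annPolar (φ x) - annPolar z : ℂ) ∈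
      ({0}ᶜ : Set ℂ) := fun h =>
    hz ⟨x, annPolar.injective (Subtype.ext (sub_eq_zero.1 h))⟩
  let d {z : Ann} (hz : z ∈ (range φ)ᶜ) : C(X, ({0}ᶜ : Set ℂ)) :=
    ⟨fun x => ⟨annPolar (φ x) - annPolar z, hne hz x⟩, by fun_prop⟩
  have hz₀ := hjoin.source_mem
  have hz₁ := hjoin.target_mem
  have h_start : e.Homotopic (d hz₀) := homotopic_of_norm_sub_lt fun x => by
    simp only [d, e, ContinuousMap.coe_mk, ContinuousMap.comp_apply,
      sub_sub_cancel_left, norm_neg, norm_annPolar, Real.exp_lt_exp, h₀ x]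
  have h_move : (d hz₀).Homotopic (d hz₁) :=
    ⟨⟨⟨fun q => ⟨annPolar (φ q.2) - annPolar (hjoin.somePath q.1),
      hne (hjoin.somePath_mem q.1) q.2⟩, by fun_prop⟩, fun x => by simp [d], fun x => by simp [d]⟩⟩
  have h_end : (ContinuousMap.const X ⟨-annPolar z₁, neg_ne_zero.2 (annPolar z₁).2⟩).Homotopic
      (d hz₁) := homotopic_of_norm_sub_lt fun x => by
    simp only [d, ContinuousMap.coe_mk, ContinuousMap.const_apply, sub_neg_eq_add, sub_add_cancel,
      norm_neg, norm_annPolar, Real.exp_lt_exp, h₁ x]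
  have he : e.Nullhomotopic := ⟨_, (h_start.trans h_move).trans h_end.symm⟩
  have hφ : φ = (annPolar.symm : C(({0}ᶜ : Set ℂ), Ann)).comp e :=
    ContinuousMap.ext fun x => (annPolar.symm_apply_apply (φ x)).symm
  rw [hφ]
  exact he.comp_right _

lemma continuous_prj : Continuous prj :=
  (AddCircle.continuous_mk' _).prodMap continuous_id

lemma isOpenQuotientMap_prj : IsOpenQuotientMap prj :=
  ⟨QuotientAddGroup.mk_surjective.prodMap Function.surjective_id, continuous_prj,
    QuotientAddGroup.isOpenMap_coe.prodMap IsOpenMap.id⟩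

lemma prj_eq_prj_iff {z w : Plane} : prj z = prj w ↔ ∃ k : ℤ, Tr k z = w := by
  have hfst : (z.1 : AddCircle (1 : ℝ)) = w.1 ↔ ∃ k : ℤ, z.1 + k = w.1 := by
    rw [eq_comm, ← sub_eq_zero, ← AddCircle.coe_sub, AddCircle.coe_eq_zero_iff]
    simp only [zsmul_one, eq_sub_iff_add_eq']
  simp only [prj, Tr, Prod.ext_iff, hfst, exists_and_right]

lemma prj_Tr (k : ℤ) (z : Plane) : prj (Tr k z) = prj z :=
  (prj_eq_prj_iff.2 ⟨k, rfl⟩).symm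

lemma dist_prj_le (z w : Plane) : dist (prj z) (prj w) ≤ dist z w :=
  max_le_max (by
    rw [dist_eq_norm, dist_eq_norm, prj, prj, ← AddCircle.coe_sub]
    exact QuotientAddGroup.norm_mk_le_norm) le_rfl

instance : LocallyPathConnectedSpace Ann :=
  isOpenQuotientMap_prj.isQuotientMap.locallyPathConnectedSpace

lemma IsEssentialCircle.separatesEnds {c : Set Ann} (hc : IsEssentialCircle c) :
    SeparatesEnds c := by
  obtain ⟨φ, -, rfl, hφ⟩ := hc
  intro C hC hconn
  by_contra! hunbdd
  have hbdd : Bornology.IsBounded (Prod.snd '' range φ) :=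
    ((isCompact_range φ.continuous).image continuous_snd).isBounded
  obtain ⟨a, ha⟩ := hbdd.bddBelow
  obtain ⟨b, hb⟩ := hbdd.bddAbove
  obtain ⟨z₀, hz₀, hz₀a⟩ := hunbdd.2 a
  obtain ⟨z₁, hz₁, hz₁b⟩ := hunbdd.1 b
  have hopen : IsOpen (connectedComponentIn (range φ)ᶜ z₀) :=
    (isCompact_range φ.continuous).isClosed.isOpen_compl.connectedComponentIn
  have hpath : IsPathConnected (connectedComponentIn (range φ)ᶜ z₀) :=
    hopen.isConnected_iff_isPathConnected.1 (isConnected_connectedComponentIn_iff.2 (hC hz₀))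
  have hjoin := hpath.joinedIn z₀ (mem_connectedComponentIn (hC hz₀)) z₁
    (hconn.isPreconnected.subset_connectedComponentIn hz₀ hC hz₁)
  exact hφ (nullhomotopic_of_joinedIn (hjoin.mono (connectedComponentIn_subset _ _))
    (fun x => hz₀a.trans_le (ha ⟨_, ⟨x, rfl⟩, rfl⟩))
    fun x => (hb ⟨_, ⟨x, rfl⟩, rfl⟩).trans_lt hz₁b)

lemma isEssentialCircle_horizontal (y : ℝ) : IsEssentialCircle {z : Ann | z.2 = y} := by
  refine ⟨⟨fun x => (x, y), by fun_prop⟩, Prod.mk_left_injective y, ?_, fun hnull => ?_⟩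
  · ext ⟨x, t⟩
    simp [eq_comm]
  · exact not_nullhomotopic_id_addCircle one_ne_zero
      (ContinuousMap.Nullhomotopic.comp_right hnull ContinuousMap.fst)

/-! ### The ends of the annulus -/

/-- The filter of neighbourhoods of the end `S`. -/
def lowerEnd : Filter Ann := comap Prod.snd atBot

/-- The filter of neighbourhoods of the end `N`. -/
def upperEnd : Filter Ann := comap Prod.snd atTop

instance : lowerEnd.NeBot := atBot_neBot.comap_of_surj Prod.snd_surjective

instance : upperEnd.NeBot := atTop_neBot.comap_of_surj Prod.snd_surjective

lemma cocompact_ann : cocompact Ann = lowerEnd ⊔ upperEnd := by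
  rw [← coprod_cocompact, cocompact_eq_bot, Filter.coprod, comap_bot, bot_sup_eq,
    cocompact_eq_atBot_atTop, comap_sup, lowerEnd, upperEnd]

lemma compl_mem_lowerEnd {K : Set Ann} (hK : IsCompact K) : Kᶜ ∈ lowerEnd :=
  (cocompact_ann.trans_ge le_sup_left) hK.compl_mem_cocompact

lemma separatesEnds_iff {K : Set Ann} : SeparatesEnds K ↔
    ∀ C ⊆ Kᶜ, IsConnected C → Cᶜ ∈ upperEnd ∨ Cᶜ ∈ lowerEnd := by
  simp only [SeparatesEnds, upperEnd, lowerEnd, (atTop_basis_Ioi.comap Prod.snd).mem_iff,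
    (atBot_basis_Iio.comap Prod.snd).mem_iff, true_and, subset_compl_comm (t := _),
    subset_def, mem_compl_iff, mem_preimage, mem_Ioi, mem_Iio, not_lt]

/-- A filter has a preconnected basis if each of its members contains a preconnected member; for the
filter of neighbourhoods of an end this says that the space is locally connected at that end. -/
def HasPreconnectedBasis {X : Type*} [TopologicalSpace X] (l : Filter X) : Prop :=
  ∀ U ∈ l, ∃ S ∈ l, S ⊆ U ∧ IsPreconnected S

namespace HasPreconnectedBasis

variable {X Y : Type*} [TopologicalSpace X] [TopologicalSpace Y] {l : Filter X}

lemma map (hl : HasPreconnectedBasis l) {f : X → Y} (hf : Continuous f) :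
    HasPreconnectedBasis (l.map f) := by
  intro U hU
  obtain ⟨S, hS, hSU, hconn⟩ := hl (f ⁻¹' U) hU
  exact ⟨f '' S, image_mem_map hS, image_subset_iff.2 hSU, hconn.image f hf.continuousOn⟩

lemma comap_snd [PreconnectedSpace Y] (hl : HasPreconnectedBasis l) :
    HasPreconnectedBasis (l.comap (Prod.snd : Y × X → X)) := by
  rintro U ⟨V, hV, hVU⟩
  obtain ⟨S, hS, hSV, hconn⟩ := hl V hV
  refine ⟨Prod.snd ⁻¹' S, preimage_mem_comap hS, (preimage_mono hSV).trans hVU, ?_⟩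
  rw [← univ_prod]
  exact isPreconnected_univ.prod hconn

lemma le_or_le_of_le_sup (hl : HasPreconnectedBasis l) {a b : Filter X} (hab : l ≤ a ⊔ b)
    {U V : Set X} (hU : IsOpen U) (hV : IsOpen V) (hUa : U ∈ a) (hVb : V ∈ b)
    (hUV : Disjoint U V) : l ≤ a ∨ l ≤ b := by
  obtain ⟨S, hS, hSUV, hconn⟩ :=
    hl (U ∪ V) (hab ⟨mem_of_superset hUa subset_union_left, mem_of_superset hVb subset_union_right⟩)
  refine (hconn.subset_or_subset hU hV hUV hSUV).imp (fun hSU W hW => ?_) fun hSV W hW => ?_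
  · filter_upwards [hS, hab ⟨mem_of_superset hW subset_union_left,
      mem_of_superset hVb (subset_union_right (s := W))⟩] with z hzS hz
    exact hz.resolve_right (disjoint_left.1 hUV (hSU hzS))
  · filter_upwards [hS, hab ⟨mem_of_superset hUa (subset_union_right (s := W)),
      mem_of_superset hW subset_union_left⟩] with z hzS hz
    exact hz.resolve_right (disjoint_right.1 hUV (hSV hzS))

end HasPreconnectedBasis

lemma hasPreconnectedBasis_lowerEnd : HasPreconnectedBasis lowerEnd :=
  HasPreconnectedBasis.comap_snd fun _ hU =>
    let ⟨a, ha⟩ := mem_atBot_sets.1 hU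
    ⟨Iic a, Iic_mem_atBot a, ha, isPreconnected_Iic⟩

lemma hasPreconnectedBasis_upperEnd : HasPreconnectedBasis upperEnd :=
  HasPreconnectedBasis.comap_snd fun _ hU =>
    let ⟨a, ha⟩ := mem_atTop_sets.1 hU
    ⟨Ici a, Ici_mem_atTop a, ha, isPreconnected_Ici⟩

/-- The group of homeomorphisms which preserve a filter; for the filter of neighbourhoods of an end,
these are the homeomorphisms which fix that end. -/
def filterStabilizer {X : Type*} [TopologicalSpace X] (l : Filter X) : Subgroup (X ≃ₜ X) where
  carrier := {f | l.map f = l}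
  mul_mem' {f g} hf hg := (map_map (m := g) (m' := f)).symm.trans ((congrArg _ hg).trans hf)
  one_mem' := map_id
  inv_mem' {f} hf := (congrArg (map f.symm) hf).symm.trans <| by
    rw [map_map, f.symm_comp_self, map_id]

lemma mem_filterStabilizer {X : Type*} [TopologicalSpace X] {l : Filter X} {f : X ≃ₜ X} :
    f ∈ filterStabilizer l ↔ l.map f = l := Iff.rfl

lemma mem_filterStabilizer_of_map_le {X : Type*} [TopologicalSpace X] {l : Filter X} {f : X ≃ₜ X}
    (hf : l.map f ≤ l) (hfinv : l.map ⇑f⁻¹ ≤ l) : f ∈ filterStabilizer l := by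
  refine le_antisymm hf ?_
  calc l = map f (map ⇑f⁻¹ l) := by rw [map_map, Homeomorph.inv_def, f.self_comp_symm, map_id]
    _ ≤ map f l := map_mono hfinv

/-- The group of homeomorphisms of the annulus which fix both ends. -/
def endsStabilizer : Subgroup (Ann ≃ₜ Ann) := filterStabilizer lowerEnd ⊓ filterStabilizer upperEnd

lemma map_le_lowerEnd_or_le_upperEnd (f : Ann ≃ₜ Ann) {l : Filter Ann}
    (hl : HasPreconnectedBasis l) (hle : l ≤ cocompact Ann) :
    l.map f ≤ lowerEnd ∨ l.map f ≤ upperEnd := by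
  have hle' : l.map f ≤ lowerEnd ⊔ upperEnd := by
    rw [← cocompact_ann]
    exact f.isClosedEmbedding.tendsto_cocompact.mono_left hle
  exact (hl.map f.continuous).le_or_le_of_le_sup hle' (isOpen_Iio.preimage continuous_snd)
    (isOpen_Ioi.preimage continuous_snd) (preimage_mem_comap (Iio_mem_atBot 0))
    (preimage_mem_comap (Ioi_mem_atTop 0)) (Ioi_disjoint_Iio_same.symm.preimage _)

namespace IntersectionProperty

variable {f : Ann ≃ₜ Ann}

lemma inv (hf : IntersectionProperty f) : IntersectionProperty ⇑f⁻¹ := by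
  intro c hc
  obtain ⟨-, hz, z, hz', rfl⟩ := hf c hc
  exact ⟨z, hz', f z, hz, f.symm_apply_apply z⟩

lemma exists_snd_eq (hf : IntersectionProperty f) (y : ℝ) : ∃ z : Ann, z.2 = y ∧ (f z).2 = y := by
  obtain ⟨-, hfz, z, hz, rfl⟩ := hf _ (isEssentialCircle_horizontal y)
  exact ⟨z, hz, hfz⟩

lemma map_lowerEnd_le (hf : IntersectionProperty f) : lowerEnd.map f ≤ lowerEnd := by
  refine (map_le_lowerEnd_or_le_upperEnd f hasPreconnectedBasis_lowerEnd
    (cocompact_ann ▸ le_sup_left)).resolve_right fun hup => ?_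
  obtain ⟨a, -, ha⟩ := (atBot_basis.comap Prod.snd).mem_iff.1
    (hup (preimage_mem_comap (Ioi_mem_atTop 0)))
  obtain ⟨z, hz, hfz⟩ := hf.exists_snd_eq (min a 0)
  have hpos : 0 < (f z).2 := ha (hz.trans_le (min_le_left a 0))
  exact hpos.not_ge (hfz.trans_le (min_le_right a 0))

lemma map_upperEnd_le (hf : IntersectionProperty f) : upperEnd.map f ≤ upperEnd := by
  refine (map_le_lowerEnd_or_le_upperEnd f hasPreconnectedBasis_upperEnd
    (cocompact_ann ▸ le_sup_right)).resolve_left fun hlow => ?_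
  obtain ⟨a, -, ha⟩ := (atTop_basis.comap Prod.snd).mem_iff.1
    (hlow (preimage_mem_comap (Iio_mem_atBot 0)))
  obtain ⟨z, hz, hfz⟩ := hf.exists_snd_eq (max a 0)
  have hneg : (f z).2 < 0 := ha ((le_max_left a 0).trans_eq hz.symm)
  exact hneg.not_ge ((le_max_right a 0).trans_eq hfz.symm)

lemma mem_endsStabilizer (hf : IntersectionProperty f) :
    f ∈ endsStabilizer :=
  ⟨mem_filterStabilizer_of_map_le hf.map_lowerEnd_le hf.inv.map_lowerEnd_le,
    mem_filterStabilizer_of_map_le hf.map_upperEnd_le hf.inv.map_upperEnd_le⟩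

end IntersectionProperty

section EndComponent

variable {X : Type*} [TopologicalSpace X] {K S : Set X} {l : Filter X} {z : X}

/-- The component of the complement of `K` which is a neighbourhood of the end described by the
filter `l`. -/
def endComponent (K : Set X) (l : Filter X) : Set X :=
  {z | connectedComponentIn Kᶜ z ∈ l}

lemma connectedComponentIn_subset_endComponent (hz : z ∈ endComponent K l) :
    connectedComponentIn Kᶜ z ⊆ endComponent K l := fun w hw => by
  change connectedComponentIn Kᶜ w ∈ l
  rwa [← connectedComponentIn_eq hw]

lemma subset_endComponent_of_inter_nonempty (hS : IsPreconnected S) (hSK : S ⊆ Kᶜ)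
    (hne : (S ∩ endComponent K l).Nonempty) : S ⊆ endComponent K l := by
  obtain ⟨z, hzS, hz⟩ := hne
  exact (hS.subset_connectedComponentIn hzS hSK).trans (connectedComponentIn_subset_endComponent hz)

lemma subset_endComponent_of_mem (hS : IsPreconnected S) (hSK : S ⊆ Kᶜ) (hSl : S ∈ l) :
    S ⊆ endComponent K l := fun _ hz =>
  mem_of_superset hSl (hS.subset_connectedComponentIn hz hSK)

lemma HasPreconnectedBasis.endComponent_mem (hl : HasPreconnectedBasis l) (hK : Kᶜ ∈ l) :
    endComponent K l ∈ l := by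
  obtain ⟨S, hSl, hSK, hS⟩ := hl _ hK
  exact mem_of_superset hSl (subset_endComponent_of_mem hS hSK hSl)

lemma closure_endComponent_subset [LocallyConnectedSpace X] (hK : IsClosed K) :
    closure (endComponent K l) ⊆ endComponent K l ∪ K := by
  intro z hz
  by_cases hzK : z ∈ K
  · exact Or.inr hzK
  · obtain ⟨w, hwz, hw⟩ := mem_closure_iff_nhds.1 hz _
      (hK.isOpen_compl.connectedComponentIn.mem_nhds (mem_connectedComponentIn hzK))
    exact Or.inl ((connectedComponentIn_eq hwz).symm ▸ hw : connectedComponentIn Kᶜ z ∈ l)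

section NeBot

variable [l.NeBot]

lemma endComponent_subset_compl : endComponent K l ⊆ Kᶜ := fun _ hz =>
  connectedComponentIn_nonempty_iff.1 (Filter.nonempty_of_mem hz)

lemma isOpen_endComponent [LocallyConnectedSpace X] (hK : IsClosed K) :
    IsOpen (endComponent K l) :=
  isOpen_iff_mem_nhds.2 fun _ hz => mem_of_superset
    (hK.isOpen_compl.connectedComponentIn.mem_nhds
      (mem_connectedComponentIn (endComponent_subset_compl hz)))
    (connectedComponentIn_subset_endComponent hz)

lemma endComponent_eq_connectedComponentIn (hz : z ∈ endComponent K l) :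
    endComponent K l = connectedComponentIn Kᶜ z := by
  refine (connectedComponentIn_subset_endComponent hz).antisymm' fun w hw => ?_
  obtain ⟨v, hvz, hvw⟩ := Filter.nonempty_of_mem (inter_mem hz hw)
  rw [connectedComponentIn_eq hvz, ← connectedComponentIn_eq hvw]
  exact mem_connectedComponentIn (endComponent_subset_compl hw)

lemma isPreconnected_endComponent : IsPreconnected (endComponent K l) := by
  obtain hempty | ⟨z, hz⟩ := (endComponent K l).eq_empty_or_nonempty
  · exact hempty ▸ isPreconnected_empty
  · exact endComponent_eq_connectedComponentIn hz ▸ isPreconnected_connectedComponentIn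

lemma image_endComponent {g : X ≃ₜ X} (hg : g ∈ filterStabilizer l) :
    g '' endComponent K l = endComponent (g '' K) l := by
  ext w
  obtain ⟨z, rfl⟩ := g.surjective w
  rw [g.injective.mem_set_image]
  by_cases hz : z ∈ K
  · exact iff_of_false (fun h => endComponent_subset_compl h hz)
      fun h => endComponent_subset_compl h (mem_image_of_mem g hz)
  · change connectedComponentIn Kᶜ z ∈ l ↔ connectedComponentIn (g '' K)ᶜ (g z) ∈ l
    rw [← image_compl_eq g.bijective, ← g.image_connectedComponentIn hz,
      ← g.preimage_image (connectedComponentIn Kᶜ z), ← mem_map, mem_filterStabilizer.1 hg,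
      g.preimage_image]

lemma closure_endComponent_subset_or [PreconnectedSpace X] [LocallyConnectedSpace X]
    {c d : Set X} (hl : HasPreconnectedBasis l) (hc : IsClosed c) (hd : IsClosed d)
    (hc' : IsPreconnected c) (hd' : IsPreconnected d) (hcl : cᶜ ∈ l) (hdl : dᶜ ∈ l)
    (hcd : Disjoint c d) (hne : endComponent c l ∪ endComponent d l ≠ univ) :
    closure (endComponent c l) ⊆ endComponent d l ∨
      closure (endComponent d l) ⊆ endComponent c l := by
  have h_of_disjoint {a b : Set X} (ha : IsClosed a) (hal : aᶜ ∈ l) (hab : Disjoint a b)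
      (hdisj : Disjoint b (endComponent a l)) : closure (endComponent a l) ⊆ endComponent b l :=
    subset_endComponent_of_mem isPreconnected_endComponent.closure
      ((closure_endComponent_subset ha).trans
        (union_subset hdisj.subset_compl_left hab.subset_compl_right))
      (mem_of_superset (hl.endComponent_mem hal) subset_closure)
  by_contra! hnot
  have hcd_sub : c ⊆ endComponent d l :=
    subset_endComponent_of_inter_nonempty hc' hcd.subset_compl_right <|
    not_disjoint_iff_nonempty_inter.1 fun h => hnot.2 (h_of_disjoint hd hdl hcd.symm h)
  have hdc_sub : d ⊆ endComponent c l :=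
    subset_endComponent_of_inter_nonempty hd' hcd.subset_compl_left <|
    not_disjoint_iff_nonempty_inter.1 fun h => hnot.1 (h_of_disjoint hc hcl hcd h)
  have hclosed : IsClosed (endComponent c l ∪ endComponent d l) := by
    refine isClosed_of_closure_subset ?_
    rw [closure_union]
    exact union_subset
      ((closure_endComponent_subset hc).trans (union_subset_union_right _ hcd_sub))
      ((closure_endComponent_subset hd).trans (union_comm (endComponent c l) _ ▸
        union_subset_union_right _ hdc_sub))
  have hopen : IsOpen (endComponent c l ∪ endComponent d l) :=
    (isOpen_endComponent hc).union (isOpen_endComponent hd)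
  exact hne (IsClopen.eq_univ ⟨hclosed, hopen⟩
    (Filter.nonempty_of_mem (mem_of_superset (hl.endComponent_mem hcl) subset_union_left)))

end NeBot

end EndComponent

lemma SeparatesEnds.compl_endComponent_mem_upperEnd {K : Set Ann} (hK : SeparatesEnds K)
    (hKl : Kᶜ ∈ lowerEnd) : (endComponent K lowerEnd)ᶜ ∈ upperEnd := by
  have hmem := hasPreconnectedBasis_lowerEnd.endComponent_mem hKl
  refine (separatesEnds_iff.1 hK _ endComponent_subset_compl
    ⟨Filter.nonempty_of_mem hmem, isPreconnected_endComponent⟩).resolve_right fun h => ?_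
  exact compl_notMem hmem h

/-! ### Equivariant walks in graphs -/

section EquivariantWalks

lemma exists_height_of_free_zpow {X : Type*} (σ : Equiv.Perm X)
    (hσ : ∀ (k : ℤ) (x : X), (σ ^ k) x = x → k = 0) :
    ∃ κ : X → ℤ, ∀ (k : ℤ) (x : X), κ ((σ ^ k) x) = κ x + k := by
  let orbitSetoid := Equiv.Perm.SameCycle.setoid σ
  have h_sameCycle (x : X) : σ.SameCycle ⟦x⟧.out x := Quotient.mk_out x
  choose κ hκ using h_sameCycle
  refine ⟨κ, fun k x => ?_⟩
  have h_out : (⟦(σ ^ k) x⟧ : Quotient orbitSetoid).out = (⟦x⟧ : Quotient orbitSetoid).out :=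
    congrArg Quotient.out (Quotient.sound ⟨-k, by simp⟩)
  have hκ_apply : (σ ^ κ ((σ ^ k) x)) (⟦x⟧ : Quotient orbitSetoid).out =
      (σ ^ (κ x + k)) (⟦x⟧ : Quotient orbitSetoid).out := by
    rw [← h_out, hκ, h_out, add_comm, zpow_add, Equiv.Perm.mul_apply, hκ]
  refine eq_of_sub_eq_zero (hσ _ ((σ ^ (κ x + k)) (⟦x⟧ : Quotient orbitSetoid).out) ?_)
  rw [← Equiv.Perm.mul_apply, ← zpow_add, sub_add_cancel, hκ_apply]

variable {V : Type*} {G : SimpleGraph V}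

lemma exists_height_of_reachable (τ : G ≃g G)
    (hτ : ∀ (k : ℤ) (v : V), G.Reachable v ((τ ^ k) v) → k = 0) :
    ∃ κ : V → ℤ, (∀ v w, G.Reachable v w → κ v = κ w) ∧
      ∀ (k : ℤ) (v : V), κ ((τ ^ k) v) = κ v + k := by
  let componentHom : (G ≃g G) →* Equiv.Perm G.ConnectedComponent :=
    MonoidHom.mk' SimpleGraph.Iso.connectedComponentEquiv fun σ σ' =>
      SimpleGraph.Iso.connectedComponentEquiv_trans σ' σ
  have happly (k : ℤ) (v : V) : (componentHom τ ^ k) (G.connectedComponentMk v) =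
      G.connectedComponentMk ((τ ^ k) v) := by
    rw [← map_zpow]; rfl
  obtain ⟨κ, hκ⟩ := exists_height_of_free_zpow (componentHom τ) fun k => Quot.ind fun v h =>
    hτ k v (SimpleGraph.ConnectedComponent.exact ((happly k v).symm.trans h).symm)
  exact ⟨fun v => κ (G.connectedComponentMk v),
    fun v w h => congrArg κ (SimpleGraph.ConnectedComponent.sound h),
    fun k v => (congrArg κ (happly k v)).symm.trans (hκ k _)⟩

lemma exists_walk_of_forall_adj {P : ℤ → V} (hP : ∀ i, G.Adj (P i) (P (i + 1))) (i : ℤ) (d : ℕ) :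
    ∃ w : G.Walk (P i) (P (i + d)), w.length = d := by
  induction d with
  | zero => exact ⟨SimpleGraph.Walk.nil.copy rfl (by simp), by simp⟩
  | succ d ih =>
    obtain ⟨w, hw⟩ := ih
    exact ⟨(w.concat (hP _)).copy rfl (by push_cast; rw [add_assoc]), by simp [hw]⟩

lemma exists_equivariant_sequence {σ : G ≃g G} {v : V} (w : G.Walk v (σ v)) (hw : 0 < w.length) :
    ∃ P : ℤ → V, (∀ i, G.Adj (P i) (P (i + 1))) ∧
      ∀ i q, P (i + w.length * q) = (σ ^ q) (P i) := by
  have hlen : (0 : ℤ) < w.length := mod_cast hw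
  let P (i : ℤ) : V := (σ ^ (i / w.length)) (w.getVert (i % w.length).toNat)
  have hP_add (i q : ℤ) : P (i + w.length * q) = (σ ^ q) (P i) := by
    simp only [P, Int.add_mul_ediv_left _ _ hlen.ne', Int.add_mul_emod_self_left, add_comm _ q,
      zpow_add, RelIso.mul_apply]
  have hP_getVert (r : ℕ) (hr : r ≤ w.length) : P r = w.getVert r := by
    obtain hr | rfl := hr.lt_or_eq
    · have hr' : (r : ℤ) < w.length := mod_cast hr
      simp [P, Int.ediv_eq_zero_of_lt (Int.natCast_nonneg r) hr',
        Int.emod_eq_of_lt (Int.natCast_nonneg r) hr']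
    · simp [P, Int.ediv_self hlen.ne']
  refine ⟨P, fun i => ?_, hP_add⟩
  obtain ⟨r, hr⟩ := Int.eq_ofNat_of_zero_le (Int.emod_nonneg i hlen.ne')
  have hr_lt : r < w.length := by exact_mod_cast hr ▸ Int.emod_lt_of_pos i hlen
  rw [← Int.emod_add_mul_ediv i w.length, hr, add_right_comm, hP_add, hP_add,
    SimpleGraph.Iso.map_adj_iff, ← Nat.cast_succ, hP_getVert r hr_lt.le, hP_getVert _ hr_lt]
  exact w.adj_getVert_succ hr_lt

lemma exists_add_natCast_eq_add_mul {n : ℕ} (hn : 0 < n) (i j : ℤ) :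
    ∃ (q : ℤ) (d : ℕ), d < n ∧ j + d = i + n * q := by
  have hn' : (0 : ℤ) < n := mod_cast hn
  refine ⟨-((i - j) / n), ((i - j) % n).toNat, ?_, ?_⟩
  · have := Int.emod_lt_of_pos (i - j) hn'
    omega
  · rw [Int.toNat_of_nonneg (Int.emod_nonneg _ hn'.ne'), Int.emod_def]
    ring

lemma exists_equivariant_sequence_injective {τ : G ≃g G}
    (hτ : ∀ (k : ℤ) (v : V), (τ ^ k) v = v → k = 0)
    (h : ∃ (k : ℤ) (v : V), k ≠ 0 ∧ G.Reachable v ((τ ^ k) v)) :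
    ∃ (P : ℤ → V) (n k : ℤ), k ≠ 0 ∧ (∀ i, G.Adj (P i) (P (i + 1))) ∧
      (∀ i q, P (i + n * q) = (τ ^ (k * q)) (P i)) ∧
      ∀ i j (l : ℤ), P i = (τ ^ l) (P j) → n ∣ i - j := by
  classical
  let IsLoopLength (d : ℕ) : Prop := ∃ (k : ℤ) (v : V), k ≠ 0 ∧
    ∃ w : G.Walk v ((τ ^ k) v), w.length = d
  have hloop : ∃ d, IsLoopLength d :=
    let ⟨k, v, hk, ⟨w⟩⟩ := h
    ⟨w.length, k, v, hk, w, rfl⟩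
  obtain ⟨k, v, hk, w, hw⟩ := Nat.find_spec hloop
  have hpos : 0 < w.length :=
    Nat.pos_of_ne_zero fun h0 => hk (hτ k v (SimpleGraph.Walk.eq_of_length_eq_zero h0).symm)
  obtain ⟨P, hadj, hper⟩ := exists_equivariant_sequence w hpos
  simp only [← zpow_mul] at hper
  refine ⟨P, w.length, k, hk, hadj, hper, fun i j l hij => ?_⟩
  -- If `P i = τ ^ l (P j)` with `i - j` not a multiple of the length of the shortest walk `w`, then
  -- one of the two arcs of `w` joining them is a shorter walk from a vertex to a translate of it.
  have hshift (i : ℤ) (d : ℕ) (l : ℤ) (hd : d < w.length)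
      (hl : P (i + d) = (τ ^ l) (P i)) : l = 0 := by
    by_contra hl0
    obtain ⟨w', hw'⟩ := exists_walk_of_forall_adj hadj i d
    exact Nat.find_min hloop (hw ▸ hd) ⟨l, P i, hl0, w'.copy rfl hl, by simpa using hw'⟩
  obtain ⟨q, d, hd, hjd⟩ := exists_add_natCast_eq_add_mul hpos i j
  have hP_jd : P (j + d) = (τ ^ (k * q + l)) (P j) := by
    rw [hjd, hper, hij, zpow_add, RelIso.mul_apply]
  have hP_eq : P (j + d) = P j := by
    rw [hP_jd, hshift j d _ hd hP_jd, zpow_zero, RelIso.one_apply]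
  obtain rfl | hd0 := d.eq_zero_or_pos
  · exact ⟨-q, by push_cast at hjd; linarith⟩
  · refine absurd (hshift (j + d) (w.length - d) k (by omega) ?_) hk
    rw [hP_eq, Nat.cast_sub hd.le, add_add_sub_cancel, ← mul_one (w.length : ℤ), hper, mul_one]

end EquivariantWalks

/-! ### Essential circles near a separating compact set -/

lemma SeparatesEnds.not_exists_lift_fst {K : Set Ann} (hsep : SeparatesEnds K) (hK : IsCompact K) :
    ¬ ∃ g : C(K, ℝ), ∀ z : K, (g z : AddCircle (1 : ℝ)) = (z : Ann).1 := by
  classical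
  rintro ⟨g, hg⟩
  obtain ⟨G, rfl⟩ := ContinuousMap.exists_restrict_eq hK.isClosed g
  have hKl : Kᶜ ∈ lowerEnd := compl_mem_lowerEnd hK
  let U : Set Ann := endComponent K lowerEnd
  -- On low circles `u` is the angular coordinate; on high ones it lifts to `ℝ`.
  let u : Ann → AddCircle (1 : ℝ) := fun z => if z ∈ U then z.1 else (G z : AddCircle (1 : ℝ))
  have hu : Continuous u := by
    refine Continuous.if (fun z hz => ?_) continuous_fst ((AddCircle.continuous_mk' 1).comp G.2)
    change z ∈ frontier U at hz
    rw [(isOpen_endComponent hK.isClosed).frontier_eq] at hz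
    exact (hg ⟨z, (closure_endComponent_subset hK.isClosed hz.1).resolve_left hz.2⟩).symm
  let circleMap (y : ℝ) : C(AddCircle (1 : ℝ), AddCircle (1 : ℝ)) :=
    ⟨fun x => u (x, y), hu.comp (by fun_prop)⟩
  obtain ⟨y₀, hy₀⟩ := (hasPreconnectedBasis_lowerEnd.endComponent_mem hKl :
    U ∈ lowerEnd) |> (atBot_basis.comap Prod.snd).mem_iff.1
  obtain ⟨y₁, hy₁⟩ := (hsep.compl_endComponent_mem_upperEnd hKl : Uᶜ ∈ upperEnd) |>
    (atTop_basis.comap Prod.snd).mem_iff.1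
  have h_id : circleMap y₀ = ContinuousMap.id _ :=
    ContinuousMap.ext fun x => if_pos (hy₀.2 (le_refl y₀))
  have h_null : (circleMap y₁).Nullhomotopic :=
    nullhomotopic_of_forall_lift ⟨fun x => G (x, y₁), by fun_prop⟩
      fun x => (if_neg (hy₁.2 (le_refl y₁))).symm
  have h_homotopic : (circleMap y₀).Homotopic (circleMap y₁) :=
    ⟨⟨⟨fun q => u (q.2, (1 - q.1) * y₀ + q.1 * y₁), hu.comp (by fun_prop)⟩,
      fun x => by simp [circleMap], fun x => by simp [circleMap]⟩⟩
  obtain ⟨c, hc⟩ := h_null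
  exact not_nullhomotopic_id_addCircle one_ne_zero ⟨c, h_id ▸ h_homotopic.trans hc⟩

lemma exists_lift_fst_of_height {K : Set Ann} {h : Plane → ℤ} (hcont : ContinuousOn h (prj ⁻¹' K))
    (hTr : ∀ (k : ℤ) (z : Plane), h (Tr k z) = h z + k) :
    ∃ g : C(K, ℝ), ∀ z : K, (g z : AddCircle (1 : ℝ)) = (z : Ann).1 := by
  have hquot : IsQuotientMap (K.restrictPreimage prj) :=
    (isOpenQuotientMap_prj.restrictPreimage K).isQuotientMap
  have hcont' : Continuous fun z : prj ⁻¹' K => (h z : ℝ) :=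
    continuous_of_discreteTopology.comp hcont.domRestrict
  let g : C(prj ⁻¹' K, ℝ) := ⟨fun z => (z : Plane).1 - h z, by fun_prop⟩
  have hg : ∀ z w, K.restrictPreimage prj z = K.restrictPreimage prj w → g z = g w := by
    intro z w hzw
    obtain ⟨k, hk⟩ := prj_eq_prj_iff.1 (congrArg Subtype.val hzw)
    change (z : Plane).1 - h z = (w : Plane).1 - h w
    rw [← hk, hTr]
    simp [Tr]
  refine ⟨hquot.lift (f := ⟨_, hquot.continuous⟩) g hg, fun z => ?_⟩
  obtain ⟨w, rfl⟩ := hquot.surjective z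
  have hlift := ContinuousMap.congr_fun (hquot.lift_comp (f := ⟨_, hquot.continuous⟩) g hg) w
  refine (congrArg _ hlift).trans ?_
  change (((w : Plane).1 - (h w : ℝ) : ℝ) : AddCircle (1 : ℝ)) = ((w : Plane).1 : AddCircle (1 : ℝ))
  rw [AddCircle.coe_sub, sub_eq_self, AddCircle.coe_eq_zero_iff]
  exact ⟨h w, zsmul_one _⟩

/-- The point of the plane represented by the vertex `v` of the square grid of mesh `1 / m`. -/
def gridPoint (m : ℕ) (v : ℤ × ℤ) : Plane := (v.1 / m, v.2 / m)

/-- The square grid of mesh `1 / m`, restricted to the vertices lying over `S`. Its vertices are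
indexed by `ℤ × ℤ`, those not lying over `S` being isolated. -/
def gridGraph (S : Set Ann) (m : ℕ) : SimpleGraph (ℤ × ℤ) where
  Adj v w := (v.1 - w.1).natAbs + (v.2 - w.2).natAbs = 1 ∧
    prj (gridPoint m v) ∈ S ∧ prj (gridPoint m w) ∈ S
  symm := ⟨fun v w h => ⟨by omega, h.2.symm⟩⟩
  loopless := ⟨fun v h => by simp at h⟩

section Grid

variable {K S : Set Ann} {m : ℕ}

lemma gridGraph_adj {v w : ℤ × ℤ} : (gridGraph S m).Adj v w ↔
    (v.1 - w.1).natAbs + (v.2 - w.2).natAbs = 1 ∧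
      prj (gridPoint m v) ∈ S ∧ prj (gridPoint m w) ∈ S := Iff.rfl

lemma gridGraph_reachable_of_le {v w : ℤ × ℤ} (h : (v.1 - w.1).natAbs + (v.2 - w.2).natAbs ≤ 1)
    (hv : prj (gridPoint m v) ∈ S) (hw : prj (gridPoint m w) ∈ S) :
    (gridGraph S m).Reachable v w := by
  obtain h_lt | h_eq := h.lt_or_eq
  · obtain rfl : v = w := Prod.ext (by omega) (by omega)
    rfl
  · exact SimpleGraph.Adj.reachable ⟨h_eq, hv, hw⟩

lemma dist_gridPoint_le_of_adj {v w : ℤ × ℤ} (h : (gridGraph S m).Adj v w) :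
    dist (gridPoint m v) (gridPoint m w) ≤ 1 / m := by
  have h_coord {x y : ℤ} (hxy : (x - y).natAbs ≤ 1) : dist (x / m : ℝ) (y / m) ≤ 1 / m := by
    rw [Real.dist_eq, ← sub_div, abs_div, Nat.abs_cast, ← Int.cast_sub, ← Int.cast_abs,
      Int.abs_eq_natAbs]
    gcongr
    exact_mod_cast hxy
  have := h.1
  exact max_le (h_coord (by omega)) (h_coord (by omega))

variable [NeZero m]

lemma gridPoint_add (v : ℤ × ℤ) (k : ℤ) :
    gridPoint m (v + (k * m, 0)) = Tr k (gridPoint m v) := by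
  simp [gridPoint, Tr, add_div]

variable (S m) in
/-- The deck transformation `Tr 1`, acting on the grid. -/
def gridShift : gridGraph S m ≃g gridGraph S m where
  toEquiv := Equiv.addRight ((1 : ℤ) * m, 0)
  map_rel_iff' {v w} := by
    simp only [gridGraph_adj, Equiv.coe_addRight, gridPoint_add, prj_Tr, Prod.fst_add, Prod.snd_add,
      add_sub_add_right_eq_sub]

lemma gridShift_zpow_apply (k : ℤ) (v : ℤ × ℤ) :
    (gridShift S m ^ k) v = v + (k * m, 0) := by
  have hone (v : ℤ × ℤ) : gridShift S m v = v + ((1 : ℤ) * m, 0) := rfl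
  have hinv (v : ℤ × ℤ) : (gridShift S m)⁻¹ v = v + -((1 : ℤ) * m, 0) := rfl
  induction k generalizing v with
  | zero => simp
  | succ k ih => rw [zpow_add_one, RelIso.mul_apply, ih, hone]; ext <;> simp; ring
  | pred k ih => rw [zpow_sub_one, RelIso.mul_apply, ih, hinv]; ext <;> simp; ring

lemma gridPoint_gridShift_zpow (k : ℤ) (v : ℤ × ℤ) :
    gridPoint m ((gridShift S m ^ k) v) = Tr k (gridPoint m v) := by
  rw [gridShift_zpow_apply, gridPoint_add]

/-- The lower left corner of the square of the grid containing `z`. -/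
def gridFloor (m : ℕ) (z : Plane) : ℤ × ℤ := (⌊m * z.1⌋, ⌊m * z.2⌋)

lemma gridFloor_Tr (k : ℤ) (z : Plane) :
    gridFloor m (Tr k z) = (gridShift S m ^ k) (gridFloor m z) := by
  have hfloor : ⌊(m : ℝ) * (z.1 + k)⌋ = ⌊(m : ℝ) * z.1⌋ + k * m := by
    rw [← Int.floor_add_intCast]
    push_cast
    ring_nf
  rw [gridShift_zpow_apply, gridFloor, gridFloor, Tr, hfloor, Prod.mk_add_mk, add_zero]

lemma dist_gridPoint_gridFloor_le (z : Plane) : dist (gridPoint m (gridFloor m z)) z ≤ 1 / m := by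
  have hm : (0 : ℝ) < m := mod_cast NeZero.pos m
  have hcoord (x : ℝ) : dist ((⌊(m : ℝ) * x⌋ : ℝ) / m) x ≤ 1 / m := by
    have hfract : x - ⌊(m : ℝ) * x⌋ / m = Int.fract ((m : ℝ) * x) / m := by
      rw [Int.fract, sub_div, mul_div_cancel_left₀ x hm.ne']
    rw [dist_comm, Real.dist_eq, hfract, abs_of_nonneg (by positivity)]
    gcongr
    exact (Int.fract_lt_one _).le
  exact max_le (hcoord z.1) (hcoord z.2)

lemma natAbs_floor_sub_floor_le_one {x y : ℝ} (h : |x - y| < 1) : (⌊x⌋ - ⌊y⌋).natAbs ≤ 1 := by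
  obtain ⟨hl, hr⟩ := abs_lt.1 h
  have h₁ : ⌊x⌋ ≤ ⌊y⌋ + 1 := by
    rw [← Int.floor_add_one]; exact Int.floor_le_floor (by linarith)
  have h₂ : ⌊y⌋ ≤ ⌊x⌋ + 1 := by
    rw [← Int.floor_add_one]; exact Int.floor_le_floor (by linarith)
  omega

lemma reachable_gridFloor (hS : Metric.thickening (2 / m) K ⊆ S) {z w : Plane} (hz : prj z ∈ K)
    (hw : prj w ∈ K) (hzw : dist z w < 1 / m) :
    (gridGraph S m).Reachable (gridFloor m z) (gridFloor m w) := by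
  have hm : (0 : ℝ) < m := mod_cast NeZero.pos m
  have h_mem {p q : Plane} (hq : prj q ∈ K) (hpq : dist p q < 1 / m) :
      prj (gridPoint m (gridFloor m p)) ∈ S := by
    refine hS (Metric.mem_thickening_iff.2 ⟨_, hq, (dist_prj_le _ _).trans_lt ?_⟩)
    calc dist (gridPoint m (gridFloor m p)) q
        ≤ dist (gridPoint m (gridFloor m p)) p + dist p q := dist_triangle _ _ _
      _ < 1 / m + 1 / m := add_lt_add_of_le_of_lt (dist_gridPoint_gridFloor_le p) hpq
      _ = 2 / m := by ring
  have h_floor {x y : ℝ} (hxy : dist x y < 1 / m) : (⌊m * x⌋ - ⌊m * y⌋).natAbs ≤ 1 := by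
    refine natAbs_floor_sub_floor_le_one ?_
    rwa [← mul_sub, abs_mul, abs_of_pos hm, ← lt_div_iff₀' hm]
  have hone_div : 0 < 1 / (m : ℝ) := by positivity
  obtain ⟨h_fst, h_snd⟩ := max_lt_iff.1 hzw
  have h_corner : prj (gridPoint m (gridFloor m (z.1, w.2))) ∈ S :=
    h_mem hz (max_lt (by rwa [dist_self]) (by rwa [dist_comm]))
  exact (gridGraph_reachable_of_le (by simpa [gridFloor] using h_floor h_snd)
    (h_mem hz (by rwa [dist_self])) h_corner).trans
    (gridGraph_reachable_of_le (by simpa [gridFloor] using h_floor h_fst) h_corner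
      (h_mem hw (by rwa [dist_self])))

lemma SeparatesEnds.exists_reachable_gridShift (hsep : SeparatesEnds K) (hK : IsCompact K)
    (hS : Metric.thickening (2 / m) K ⊆ S) :
    ∃ (k : ℤ) (v : ℤ × ℤ), k ≠ 0 ∧ (gridGraph S m).Reachable v ((gridShift S m ^ k) v) := by
  by_contra! hnot
  obtain ⟨κ, hκ_reach, hκ_shift⟩ := exists_height_of_reachable (gridShift S m) fun k v h =>
    not_imp_comm.1 (hnot k v) (not_not.2 h)
  refine hsep.not_exists_lift_fst hK (exists_lift_fst_of_height (h := fun z => κ (gridFloor m z))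
    (fun z hz => ?_) fun k z => by rw [gridFloor_Tr, hκ_shift])
  have hm : (0 : ℝ) < 1 / m := by have := NeZero.pos m; positivity
  refine (continuousWithinAt_const (b := κ (gridFloor m z))).congr_of_eventuallyEq ?_ rfl
  filter_upwards [self_mem_nhdsWithin, nhdsWithin_le_nhds (Metric.ball_mem_nhds z hm)] with w hw hwz
  exact hκ_reach _ _ (reachable_gridFloor hS hw hz hwz)

end Grid

section PolygonalLine

variable {E : Type*} [AddCommGroup E] [Module ℝ E]

/-- The piecewise affine curve which passes through `u i` at each integer time `i`. -/
def polygonalLine (u : ℤ → E) (t : ℝ) : E := AffineMap.lineMap (u ⌊t⌋) (u (⌊t⌋ + 1)) (Int.fract t)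

lemma polygonalLine_add_intCast (u : ℤ → E) (t : ℝ) (n : ℤ) :
    polygonalLine u (t + n) = polygonalLine (fun i => u (i + n)) t := by
  simp only [polygonalLine, Int.floor_add_intCast, Int.fract_add_intCast, add_right_comm]

lemma continuous_polygonalLine [TopologicalSpace E] [IsTopologicalAddGroup E] [ContinuousSMul ℝ E]
    (u : ℤ → E) : Continuous (polygonalLine u) := by
  refine continuous_iff_continuousAt.2 fun t => ?_
  let i := ⌊t⌋
  have h_local : (fun s => u i + max (s - i) 0 • (u (i + 1) - u i) +
      min (s - i) 0 • (u i - u (i - 1))) =ᶠ[𝓝 t] polygonalLine u := by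
    filter_upwards [Ioo_mem_nhds ((sub_one_lt _).trans_le (Int.floor_le t))
      (Int.lt_floor_add_one t)] with s hs
    rw [polygonalLine, AffineMap.lineMap_apply_module', Int.fract]
    by_cases his : (i : ℝ) ≤ s
    · rw [Int.floor_eq_iff.2 ⟨his, hs.2⟩, max_eq_left (sub_nonneg.2 his),
        min_eq_right (sub_nonneg.2 his), zero_smul, add_zero, add_comm]
    · have hfloor : ⌊s⌋ = i - 1 :=
        Int.floor_eq_iff.2 ⟨by push_cast; exact hs.1.le, by push_cast; linarith⟩
      have hle : s - i ≤ 0 := by linarith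
      rw [hfloor, max_eq_right hle, min_eq_left hle, sub_add_cancel]
      push_cast
      module
  exact ContinuousAt.congr (Continuous.continuousAt (by fun_prop)) h_local

lemma dist_polygonalLine_le {E : Type*} [NormedAddCommGroup E] [NormedSpace ℝ E] (u : ℤ → E)
    (t : ℝ) : dist (polygonalLine u t) (u ⌊t⌋) ≤ dist (u ⌊t⌋) (u (⌊t⌋ + 1)) := by
  rw [polygonalLine, dist_lineMap_left, Real.norm_of_nonneg (Int.fract_nonneg t)]
  exact mul_le_of_le_one_left dist_nonneg (Int.fract_lt_one t).le

end PolygonalLine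

section GridEdges

variable {s t : ℝ}

lemma eq_zero_of_lineMap_eq_intCast {a a' b : ℤ} (ha : (a - a').natAbs = 1)
    (hs : s ∈ Ico (0 : ℝ) 1) (h : AffineMap.lineMap (a : ℝ) (a' : ℝ) s = b) : s = 0 ∧ a = b := by
  have habs : |((b - a : ℤ) : ℝ)| = s := by
    rw [Int.cast_sub, ← h, AffineMap.lineMap_apply_ring', add_sub_cancel_right, abs_mul,
      ← Int.cast_sub, ← Int.cast_abs, abs_sub_comm, Int.abs_eq_natAbs, ha, abs_of_nonneg hs.1,
      Nat.cast_one, Int.cast_one, mul_one]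
  have hab : b - a = 0 := by
    rw [← Int.abs_lt_one_iff, ← Int.cast_lt (R := ℝ), Int.cast_abs, habs, Int.cast_one]
    exact hs.2
  exact ⟨by rw [← habs, hab, Int.cast_zero, abs_zero], (sub_eq_zero.1 hab).symm⟩

lemma edges_eq_of_lineMap_intCast_eq {a a' b b' : ℤ} (ha : (a - a').natAbs = 1)
    (hb : (b - b').natAbs = 1) (hs : s ∈ Ico (0 : ℝ) 1) (ht : t ∈ Ico (0 : ℝ) 1)
    (h : AffineMap.lineMap (a : ℝ) (a' : ℝ) s = AffineMap.lineMap (b : ℝ) (b' : ℝ) t) :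
    (s = t ∧ a = b) ∨ (a = b' ∧ a' = b) := by
  obtain ⟨⟨hs₀, hs₁⟩, ht₀, ht₁⟩ := And.intro hs ht
  simp only [AffineMap.lineMap_apply_ring'] at h
  obtain ha' | ha' : a' = a + 1 ∨ a' = a - 1 := by omega
  all_goals obtain hb' | hb' : b' = b + 1 ∨ b' = b - 1 := by omega
  all_goals
    subst ha' hb'
    push_cast at h
    have h_lower : b - 2 < a := by
      rw [← Int.cast_lt (R := ℝ)]; push_cast; linarith
    have h_upper : a < b + 2 := by
      rw [← Int.cast_lt (R := ℝ)]; push_cast; linarith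
    obtain rfl | rfl | rfl : a = b - 1 ∨ a = b ∨ a = b + 1 := by omega
    all_goals grind

lemma edges_eq_of_lineMap_gridPoint_eq {m : ℕ} [NeZero m] {v v' w w' : ℤ × ℤ}
    (hv : (v.1 - v'.1).natAbs + (v.2 - v'.2).natAbs = 1)
    (hw : (w.1 - w'.1).natAbs + (w.2 - w'.2).natAbs = 1)
    (hs : s ∈ Ico (0 : ℝ) 1) (ht : t ∈ Ico (0 : ℝ) 1)
    (h : AffineMap.lineMap (gridPoint m v) (gridPoint m v') s =
      AffineMap.lineMap (gridPoint m w) (gridPoint m w') t) :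
    (s = t ∧ v = w) ∨ (v = w' ∧ v' = w) := by
  have hm : (m : ℝ) ≠ 0 := NeZero.ne _
  have h_coord {x x' y y' : ℤ}
      (hxy : AffineMap.lineMap (x / m : ℝ) (x' / m) s = AffineMap.lineMap (y / m : ℝ) (y' / m) t) :
      AffineMap.lineMap (x : ℝ) (x' : ℝ) s = AffineMap.lineMap (y : ℝ) (y' : ℝ) t := by
    simp only [AffineMap.lineMap_apply_ring', ← sub_div, ← mul_div_assoc, ← add_div] at hxy ⊢
    exact (div_left_inj' hm).1 hxy
  have h_fst := h_coord (by simpa [gridPoint] using congrArg Prod.fst h)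
  have h_snd := h_coord (by simpa [gridPoint] using congrArg Prod.snd h)
  obtain ⟨v₁, v₂⟩ := v
  obtain ⟨v₁', v₂'⟩ := v'
  obtain ⟨w₁, w₂⟩ := w
  obtain ⟨w₁', w₂'⟩ := w'
  dsimp only at hv hw h_fst h_snd
  simp only [Prod.mk.injEq]
  obtain ⟨hv₁, rfl⟩ | ⟨rfl, hv₂⟩ :
    ((v₁ - v₁').natAbs = 1 ∧ v₂' = v₂) ∨ (v₁' = v₁ ∧ (v₂ - v₂').natAbs = 1) := by omega
  all_goals
    obtain ⟨hw₁, rfl⟩ | ⟨rfl, hw₂⟩ :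
      ((w₁ - w₁').natAbs = 1 ∧ w₂' = w₂) ∨ (w₁' = w₁ ∧ (w₂ - w₂').natAbs = 1) := by omega
    all_goals simp only [AffineMap.lineMap_same_apply, Int.cast_inj] at h_fst h_snd
  · obtain ⟨hst, rfl⟩ | ⟨rfl, rfl⟩ := edges_eq_of_lineMap_intCast_eq hv₁ hw₁ hs ht h_fst <;> grind
  · have := eq_zero_of_lineMap_eq_intCast hv₁ hs h_fst
    have := eq_zero_of_lineMap_eq_intCast hw₂ ht h_snd.symm
    grind
  · have := eq_zero_of_lineMap_eq_intCast hw₁ ht h_fst.symm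
    have := eq_zero_of_lineMap_eq_intCast hv₂ hs h_snd
    grind
  · obtain ⟨hst, rfl⟩ | ⟨rfl, rfl⟩ := edges_eq_of_lineMap_intCast_eq hv₂ hw₂ hs ht h_snd <;> grind

end GridEdges

lemma isEssentialCircle_range_prj_comp {γ : ℝ → Plane} (hγ : Continuous γ) {p : ℝ} (hp : p ≠ 0)
    {k : ℤ} (hk : k ≠ 0) (hper : ∀ t, γ (t + p) = Tr k (γ t))
    (hinj : ∀ s t, prj (γ s) = prj (γ t) → ∃ q : ℤ, s - t = p * q) :
    IsEssentialCircle (range (prj ∘ γ)) := by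
  have hperiodic : Function.Periodic (fun t => prj (γ (p * t))) 1 := fun t => by
    simp only [mul_add, mul_one, hper, prj_Tr]
  let φ : C(AddCircle (1 : ℝ), Ann) := ⟨hperiodic.lift,
    (QuotientAddGroup.isQuotientMap_mk (AddSubgroup.zmultiples (1 : ℝ))).continuous_iff.2
      (continuous_prj.comp (hγ.comp (continuous_const_mul p)))⟩
  refine ⟨φ, fun x y hxy => ?_, ?_, fun hnull => ?_⟩
  · obtain ⟨s, rfl⟩ := QuotientAddGroup.mk_surjective x
    obtain ⟨t, rfl⟩ := QuotientAddGroup.mk_surjective y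
    obtain ⟨q, hq⟩ := hinj _ _ hxy
    rw [← mul_sub, mul_right_inj' hp] at hq
    exact sub_eq_zero.1 ((AddCircle.coe_eq_zero_iff 1).2 ⟨q, by rw [zsmul_one, ← hq]⟩)
  · rw [← QuotientAddGroup.mk_surjective.range_comp φ]
    exact (mul_left_surjective₀ hp).range_comp (prj ∘ γ)
  · refine not_nullhomotopic_of_lift (φ := ContinuousMap.fst.comp φ) (a := fun t => (γ (p * t)).1)
      (by fun_prop) (fun s => rfl) ?_
      (ContinuousMap.Nullhomotopic.comp_right hnull ContinuousMap.fst)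
    rw [mul_one, mul_zero, ← zero_add p, hper]
    simpa [Tr] using hk

lemma lineMap_Tr (k : ℤ) (z w : Plane) (t : ℝ) :
    AffineMap.lineMap (Tr k z) (Tr k w) t = Tr k (AffineMap.lineMap z w t) := by
  ext <;> simp [Tr, AffineMap.lineMap_apply_ring', add_assoc]

lemma polygonalLine_Tr (k : ℤ) (u : ℤ → Plane) (t : ℝ) :
    polygonalLine (fun i => Tr k (u i)) t = Tr k (polygonalLine u t) :=
  lineMap_Tr k _ _ _

section EquivariantSequence

variable {S : Set Ann} {m : ℕ} [NeZero m] {P : ℤ → ℤ × ℤ} {n k : ℤ}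

lemma not_dvd_two_of_equivariant_sequence (hm : 3 ≤ m) (hk : k ≠ 0)
    (hadj : ∀ i, (gridGraph S m).Adj (P i) (P (i + 1)))
    (hper : ∀ i q, P (i + n * q) = (gridShift S m ^ (k * q)) (P i)) : ¬ n ∣ 2 := by
  rintro ⟨q, hq⟩
  have h₁ := (hadj 0).1
  have h₂ := (hadj (0 + 1)).1
  have hkq : k * q ≠ 0 := mul_ne_zero hk (by rintro rfl; omega)
  have hm_le : m ≤ (k * q * m).natAbs := by
    rw [Int.natAbs_mul, Int.natAbs_natCast]
    exact Nat.le_mul_of_pos_left m (Int.natAbs_pos.2 hkq)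
  rw [add_assoc, one_add_one_eq_two, hq, hper, gridShift_zpow_apply] at h₂
  simp only [Prod.fst_add, Prod.snd_add] at h₂
  omega

lemma isEssentialCircle_of_equivariant_sequence (hm : 3 ≤ m) (hk : k ≠ 0)
    (hadj : ∀ i, (gridGraph S m).Adj (P i) (P (i + 1)))
    (hper : ∀ i q, P (i + n * q) = (gridShift S m ^ (k * q)) (P i))
    (hinj : ∀ i j (l : ℤ), P i = (gridShift S m ^ l) (P j) → n ∣ i - j) :
    IsEssentialCircle (range (prj ∘ polygonalLine (gridPoint m ∘ P))) := by
  have hndvd := not_dvd_two_of_equivariant_sequence hm hk hadj hper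
  have hn : (n : ℝ) ≠ 0 := by
    refine Int.cast_ne_zero.2 fun hn => ?_
    have hP := hper 0 1
    rw [hn, zero_mul, add_zero, mul_one, gridShift_zpow_apply, left_eq_add] at hP
    simp [hk, NeZero.ne] at hP
  refine isEssentialCircle_range_prj_comp (continuous_polygonalLine _) hn hk (fun t => ?_)
    fun s t hst => ?_
  · rw [polygonalLine_add_intCast, ← polygonalLine_Tr]
    congr! with i
    rw [Function.comp_apply, Function.comp_apply, ← gridPoint_gridShift_zpow (S := S), ← mul_one k,
      ← hper, mul_one]
  · obtain ⟨l, hl⟩ := prj_eq_prj_iff.1 hst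
    simp only [polygonalLine, ← lineMap_Tr, Function.comp_apply,
      ← gridPoint_gridShift_zpow (S := S)] at hl
    obtain ⟨hfract, hfloor⟩ | ⟨h_fst, h_snd⟩ := edges_eq_of_lineMap_gridPoint_eq
      (SimpleGraph.Iso.map_adj_iff (gridShift S m ^ l) |>.2 (hadj ⌊s⌋)).1 (hadj ⌊t⌋).1
      ⟨Int.fract_nonneg s, Int.fract_lt_one s⟩ ⟨Int.fract_nonneg t, Int.fract_lt_one t⟩ hl
    · obtain ⟨q, hq⟩ := hinj _ _ _ hfloor.symm
      refine ⟨-q, ?_⟩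
      rw [← Int.floor_add_fract s, ← Int.floor_add_fract t, hfract, add_sub_add_right_eq_sub,
        ← Int.cast_sub, ← neg_sub, hq, Int.cast_neg, Int.cast_mul, Int.cast_neg, mul_neg]
    · have h_two : n ∣ ⌊t⌋ + 1 - ⌊s⌋ - (⌊t⌋ - (⌊s⌋ + 1)) :=
        (hinj _ _ _ h_fst.symm).sub (hinj _ _ _ h_snd.symm)
      exact absurd (by convert h_two using 1; ring) hndvd

end EquivariantSequence

lemma SeparatesEnds.exists_isEssentialCircle_subset {K O : Set Ann} (hsep : SeparatesEnds K)
    (hK : IsCompact K) (hO : IsOpen O) (hKO : K ⊆ O) : ∃ c ⊆ O, IsEssentialCircle c := by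
  obtain ⟨δ, hδ, hδO⟩ := hK.exists_thickening_subset_open hO hKO
  obtain ⟨m, hm, hm_inv⟩ : ∃ m : ℕ, 3 ≤ m ∧ 1 / (m : ℝ) < δ / 4 :=
    ((eventually_ge_atTop 3).and
      (tendsto_one_div_atTop_nhds_zero_nat.eventually_lt_const (by positivity))).exists
  have : NeZero m := ⟨by omega⟩
  let S := Metric.thickening (δ / 2) K
  have hS : Metric.thickening (2 / m) K ⊆ S :=
    Metric.thickening_mono (by rw [← mul_one_div]; linarith) K
  obtain ⟨P, n, k, hk, hadj, hper, hinj⟩ := exists_equivariant_sequence_injective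
    (fun k v h => by simpa [gridShift_zpow_apply, NeZero.ne] using h)
    (hsep.exists_reachable_gridShift hK hS)
  refine ⟨_, ?_, isEssentialCircle_of_equivariant_sequence hm hk hadj hper hinj⟩
  rintro _ ⟨t, rfl⟩
  let u := gridPoint m ∘ P
  have hu_mem : prj (u ⌊t⌋) ∈ S := (hadj ⌊t⌋).2.1
  obtain ⟨z, hz, hz_dist⟩ := Metric.mem_thickening_iff.1 hu_mem
  refine hδO (Metric.mem_thickening_iff.2 ⟨z, hz, ?_⟩)
  calc dist (prj (polygonalLine u t)) z
      ≤ dist (prj (polygonalLine u t)) (prj (u ⌊t⌋)) + dist (prj (u ⌊t⌋)) z := dist_triangle _ _ _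
    _ ≤ dist (polygonalLine u t) (u ⌊t⌋) + dist (prj (u ⌊t⌋)) z := by gcongr; exact dist_prj_le _ _
    _ ≤ dist (u ⌊t⌋) (u (⌊t⌋ + 1)) + dist (prj (u ⌊t⌋)) z := by
      gcongr; exact dist_polygonalLine_le u t
    _ < δ / 2 + δ / 2 := by
      gcongr
      exact ((dist_gridPoint_le_of_adj (hadj ⌊t⌋)).trans_lt hm_inv).trans (by linarith)
    _ = δ := add_halves δ

/-! ### Attracting neighbourhoods of an end -/

lemma exists_isOpen_image_closure_subset {X : Type*} [TopologicalSpace X] [NormalSpace X]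
    (f : X ≃ₜ X) {n : ℕ} (hn : n ≠ 0) {U : Set X} (hU : IsOpen U)
    (hatt : ⇑(f ^ n) '' closure U ⊆ U) :
    ∃ V, IsOpen V ∧ f '' closure V ⊆ V ∧ ⇑(f ^ n) '' U ⊆ V ∧
      V ⊆ ⋃ i < n, ⇑(f ^ i) '' U := by
  obtain ⟨u, hu₀, hu₁, -⟩ := exists_continuous_zero_one_of_isClosed
    ((f ^ n).isClosedMap _ isClosed_closure) hU.isClosed_compl
    (disjoint_compl_right.mono_left hatt)
  let level (i : ℕ) : ℝ := (i + 1) / (n + 1)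
  have hlevel_pos : 0 < level 0 := by positivity
  have hlevel_lt (i : ℕ) : level i < level (i + 1) := by
    simp only [level]; gcongr; simp
  have hsub {i : ℕ} (hi : i < n) {z : X} (hz : u z ≤ level i) : z ∈ U := by
    by_contra hzU
    have hlt : level i < 1 := (div_lt_one (by positivity)).2 (by exact_mod_cast Nat.succ_lt_succ hi)
    exact (hz.trans_lt hlt).ne (hu₁ hzU)
  have hzero {z : X} (hz : z ∈ U) : u ((f ^ n) z) < level 0 :=
    (hu₀ (mem_image_of_mem _ (subset_closure hz))).trans_lt hlevel_pos
  -- The levels increase, so that `f` maps the closure of each piece of `V` into the next piece.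
  let V : Set X := ⋃ i < n, ⇑(f ^ i) '' {z | u z < level i}
  let A : Set X := ⋃ i < n, ⇑(f ^ i) '' {z | u z ≤ level i}
  have hVopen : IsOpen V := isOpen_biUnion fun i _ =>
    (f ^ i).isOpenMap _ (isOpen_lt u.continuous continuous_const)
  have hAclosed : IsClosed A := (finite_lt_nat n).isClosed_biUnion fun i _ =>
    (f ^ i).isClosedMap _ (isClosed_le u.continuous continuous_const)
  have hVA : V ⊆ A := iUnion₂_mono fun i _ => image_mono fun z (hz : u z < level i) => hz.le
  have hVzero {z : X} (hz : z ∈ U) : (f ^ n) z ∈ V :=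
    mem_biUnion (pos_of_ne_zero hn) ⟨(f ^ n) z, hzero hz, rfl⟩
  have hfA : f '' A ⊆ V := by
    rintro _ ⟨_, hw, rfl⟩
    obtain ⟨i, hi, z, hz, rfl⟩ := mem_iUnion₂.1 hw
    rw [← Homeomorph.mul_apply, ← pow_succ']
    obtain hlt | heq := Nat.lt_or_eq_of_le (Nat.succ_le_of_lt hi)
    · exact mem_biUnion hlt ⟨z, hz.trans_lt (hlevel_lt i), rfl⟩
    · rw [← Nat.succ_eq_add_one, heq]
      exact hVzero (hsub hi hz)
  refine ⟨V, hVopen, (image_mono (closure_minimal hVA hAclosed)).trans hfA,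
    image_subset_iff.2 fun z hz => hVzero hz, ?_⟩
  exact iUnion₂_mono fun i hi => image_mono fun z (hz : u z < level i) => hsub hi hz.le

section Frontier

variable {V : Set Ann}

lemma isCompact_frontier_of_mem_ends (hV : IsOpen V) (hlow : V ∈ lowerEnd)
    (hup : (closure V)ᶜ ∈ upperEnd) : IsCompact (frontier V) := by
  have hcompl : (frontier V)ᶜ = V ∪ (closure V)ᶜ := by
    rw [compl_frontier_eq_union_interior, hV.interior_eq, interior_compl]
  have hmem : (frontier V)ᶜ ∈ cocompact Ann := by
    rw [cocompact_ann, hcompl]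
    exact union_mem_sup hlow hup
  obtain ⟨t, ht, hsub⟩ := mem_cocompact'.1 hmem
  exact ht.of_isClosed_subset isClosed_frontier (compl_compl (frontier V) ▸ hsub)

lemma separatesEnds_frontier_of_mem_ends (hV : IsOpen V) (hlow : V ∈ lowerEnd)
    (hup : (closure V)ᶜ ∈ upperEnd) : SeparatesEnds (frontier V) := by
  refine separatesEnds_iff.2 fun C hC hconn => ?_
  rw [compl_frontier_eq_union_interior, hV.interior_eq, interior_compl] at hC
  refine (hconn.isPreconnected.subset_or_subset hV isClosed_closure.isOpen_compl
    (disjoint_compl_right.mono_left subset_closure) hC).imp (fun hCV => ?_) fun hCV => ?_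
  · exact mem_of_superset hup (compl_subset_compl.2 (hCV.trans subset_closure))
  · exact mem_of_superset hlow (subset_closure.trans (subset_compl_comm.1 hCV))

end Frontier

lemma image_mem_of_mem_filterStabilizer {X : Type*} [TopologicalSpace X] {l : Filter X}
    {f : X ≃ₜ X} (hf : f ∈ filterStabilizer l) {S : Set X} (hS : S ∈ l) : f '' S ∈ l :=
  mem_filterStabilizer.1 hf ▸ image_mem_map hS

namespace IntersectionProperty

variable {f : Ann ≃ₜ Ann}

lemma inter_image_nonempty (hf : IntersectionProperty f) {K : Set Ann} (hK : IsCompact K)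
    (hsep : SeparatesEnds K) : (K ∩ f '' K).Nonempty := by
  by_contra! hempty
  obtain ⟨A, B, hA, hB, hKA, hKB, hAB⟩ := SeparatedNhds.of_isCompact_isCompact hK
    (hK.image f.continuous) (disjoint_iff_inter_eq_empty.2 hempty)
  obtain ⟨c, hcAB, hc⟩ := hsep.exists_isEssentialCircle_subset hK
    (hA.inter (hB.preimage f.continuous)) (subset_inter hKA (image_subset_iff.1 hKB))
  obtain ⟨_, hfz, z, hz, rfl⟩ := hf c hc
  exact disjoint_left.1 hAB (hcAB hfz).1 (hcAB hz).2

lemma not_image_pow_closure_subset (hf : IntersectionProperty f) {n : ℕ} (hn : n ≠ 0) {U : Set Ann}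
    (hU : IsOpen U) (hlow : U ∈ lowerEnd) (hup : Uᶜ ∈ upperEnd) :
    ¬ ⇑(f ^ n) '' closure U ⊆ U := by
  intro hatt
  obtain ⟨V, hVopen, hfV, hUV, hVU⟩ := exists_isOpen_image_closure_subset f hn hU hatt
  obtain ⟨hf_low, hf_up⟩ := Subgroup.mem_inf.1 hf.mem_endsStabilizer
  have hVlow : V ∈ lowerEnd :=
    mem_of_superset (image_mem_of_mem_filterStabilizer (pow_mem hf_low n) hlow) hUV
  have hVup : Vᶜ ∈ upperEnd := by
    refine mem_of_superset ((biInter_mem (finite_lt_nat n)).2 fun i _ =>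
      image_mem_of_mem_filterStabilizer (pow_mem hf_up i) hup) ?_
    simp only [image_compl_eq (f ^ _).bijective]
    exact compl_iUnion₂ (fun i (_ : i < n) => ⇑(f ^ i) '' U) ▸ compl_subset_compl.2 hVU
  have hclosure_up : (closure V)ᶜ ∈ upperEnd := by
    have hpre : f ⁻¹' Vᶜ ∈ upperEnd := by rwa [← mem_map, mem_filterStabilizer.1 hf_up]
    exact mem_of_superset hpre (compl_subset_compl.2 (image_subset_iff.1 hfV))
  obtain ⟨_, hfz, z, hz, rfl⟩ := hf.inter_image_nonempty
    (isCompact_frontier_of_mem_ends hVopen hVlow hclosure_up)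
    (separatesEnds_frontier_of_mem_ends hVopen hVlow hclosure_up)
  exact (hVopen.frontier_eq ▸ hfz).2 (hfV (mem_image_of_mem f hz.1))

lemma pow (hf : IntersectionProperty f) {n : ℕ} (hn : n ≠ 0) : IntersectionProperty ⇑(f ^ n) := by
  intro c hc
  by_contra! hempty
  have hg : f ^ n ∈ endsStabilizer := pow_mem hf.mem_endsStabilizer n
  have hcsep := hc.separatesEnds
  obtain ⟨φ, -, rfl, -⟩ := hc
  have hcomp : IsCompact (range φ) := isCompact_range φ.continuous
  have hcomp_image := hcomp.image (f ^ n).continuous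
  have hlow := compl_mem_lowerEnd hcomp
  have hconn : IsPreconnected (range φ) := isPreconnected_range φ.continuous
  have himage := image_endComponent (K := range φ) (Subgroup.mem_inf.1 hg).1
  set L := endComponent (range φ) lowerEnd
  have hLopen : IsOpen L := isOpen_endComponent hcomp.isClosed
  have hLlow : L ∈ lowerEnd := hasPreconnectedBasis_lowerEnd.endComponent_mem hlow
  have hLup : Lᶜ ∈ upperEnd := hcsep.compl_endComponent_mem_upperEnd hlow
  have hne : L ∪ endComponent (⇑(f ^ n) '' range φ) lowerEnd ≠ univ := by
    have himage_up : (⇑(f ^ n) '' L)ᶜ ∈ upperEnd := image_compl_eq (f ^ n).bijective ▸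
      image_mem_of_mem_filterStabilizer (Subgroup.mem_inf.1 hg).2 hLup
    rw [← himage, ← nonempty_compl, compl_union]
    exact Filter.nonempty_of_mem (inter_mem hLup himage_up)
  obtain h | h := closure_endComponent_subset_or hasPreconnectedBasis_lowerEnd hcomp.isClosed
    hcomp_image.isClosed hconn (hconn.image _ (f ^ n).continuous.continuousOn) hlow
    (compl_mem_lowerEnd hcomp_image) (disjoint_iff_inter_eq_empty.2 hempty) hne
  · refine hf.inv.not_image_pow_closure_subset hn hLopen hLlow hLup ?_
    rw [inv_pow, Homeomorph.inv_def, (f ^ n).image_symm]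
    exact (preimage_mono (h.trans himage.ge)).trans_eq ((f ^ n).preimage_image L)
  · refine hf.not_image_pow_closure_subset hn hLopen hLlow hLup ?_
    rwa [(f ^ n).image_closure, himage]

end IntersectionProperty

lemma IsLift.prj_iterate {f : Ann ≃ₜ Ann} {F : Plane ≃ₜ Plane} (hF : IsLift f F) (n : ℕ)
    (p : Plane) : prj (F^[n] p) = (f ^ n) (prj p) := by
  induction n with
  | zero => rfl
  | succ n ih => rw [Function.iterate_succ_apply', hF, ih, pow_succ', Homeomorph.mul_apply]

theorem rotWeakK_nonempty_of_separating_general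
    (f : Ann ≃ₜ Ann) (F : Plane ≃ₜ Plane)
    (hint : IntersectionProperty f) (hlift : IsLift f F)
    (K : Set Ann) (hK : IsCompact K) (hsep : SeparatesEnds K) :
    (RotWeakK ⇑F K).Nonempty ∧ (RotWeak ⇑F).Nonempty := by
  have hreturn (k : ℕ) : ∃ p : Plane, prj p ∈ K ∧ prj (F^[k + 1] p) ∈ K := by
    obtain ⟨_, hfz, z, hz, rfl⟩ := (hint.pow k.succ_ne_zero).inter_image_nonempty hK hsep
    obtain ⟨p, rfl⟩ := isOpenQuotientMap_prj.surjective z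
    exact ⟨p, hz, hlift.prj_iterate (k + 1) p ▸ hfz⟩
  choose p hp hFp using hreturn
  obtain ⟨r, φ, hφ, hr⟩ := CompactSpace.tendsto_subseq fun k : ℕ =>
    ((((F^[k + 1] (p k)).1 - (p k).1) / ((k + 1 : ℕ) : ℝ) : ℝ) : EReal)
  have hmem : r ∈ RotWeakK F K := ⟨p ∘ φ, fun k => φ k + 1, fun k => hp (φ k), fun k => hFp (φ k),
    fun k => (φ k).succ_pos, (tendsto_add_atTop_nat 1).comp hφ.tendsto_atTop, hr⟩
  exact ⟨⟨r, hmem⟩, r, mem_biUnion hK hmem⟩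

/-- Proposition 5.1 (2): if a compact set `K` separates the two ends of 𝔸, then
`Rot_weak,K(F) ≠ ∅`; consequently `Rot_weak(F) ≠ ∅`. -/
theorem rotWeakK_nonempty_of_separating
    (f : Ann ≃ₜ Ann) (F : Plane ≃ₜ Plane)
    (hiso : IsotopicToId f) (hint : IntersectionProperty f) (hlift : IsLift f F)
    (K : Set Ann) (hK : IsCompact K) (hsep : SeparatesEnds K) :
    (RotWeakK ⇑F K).Nonempty ∧ (RotWeak ⇑F).Nonempty :=
  rotWeakK_nonempty_of_separating_general f F hint hlift K hK hsep
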